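/- For n ≥ 2, the number of parking functions a of length n with a_1 < a_2 is greater than or equal to the number of parking functions of length n with a_1 = a_2. -/

import Mathlib

/-!
The inequality is witnessed by an explicit injection from the parking functions with `a₁ = a₂`
to those with `a₁ < a₂`.  Write a parking function as `(x, y, r)`, where `r` is the tail.

* `(x, x, r)` with `x > 0` is sent to `(x - 1, x, r)`.
* `(0, 0, r)` is sent to `(0, 2, r)` if `(1, 1, r)` is a parking function, and to `(0, 1, r)`
  otherwise.

The images of the first kind have `a₂ = a₁ + 1`, so the only possible collision is between the
images of `(1, 1, r)` and `(0, 0, r)`, which the case distinction excludes.  If `(1, 1, r)` is a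
parking function then `r` contains a `0`, and this is what makes `(0, 2, r)` a parking function.
-/

/-- A parking function of length `n`: a function `a : Fin n → ℕ` such that for
every `k ≤ n`, at least `k` of the entries are `< k`.  (This forces all entries
to lie in `{0, …, n-1}`.) -/
def IsPF (n : ℕ) (a : Fin n → ℕ) : Prop :=
  ∀ k : ℕ, k ≤ n → k ≤ (Finset.univ.filter (fun i => a i < k)).card

theorem IsPF.mono {n : ℕ} {a b : Fin n → ℕ} (hb : IsPF n b) (h : ∀ i, a i ≤ b i) :
    IsPF n a := fun k hk =>
  (hb k hk).trans (Finset.card_le_card fun i hi => by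
    simp only [Finset.mem_filter, Finset.mem_univ, true_and] at hi ⊢
    exact (h i).trans_lt hi)

theorem IsPF.lt {n : ℕ} {a : Fin n → ℕ} (ha : IsPF n a) (i : Fin n) : a i < n := by
  have h := ha n le_rfl
  have h' : (Finset.univ.filter (fun i => a i < n)) = Finset.univ :=
    Finset.eq_univ_of_card _ (le_antisymm (Finset.card_le_univ _) (by simpa using h))
  have := Finset.mem_univ i
  rw [← h'] at this
  simpa using this

/-- Raising an entry to `1` preserves parking functions as long as another entry is `0`. -/
theorem IsPF.update_one {n : ℕ} {a : Fin n → ℕ} (ha : IsPF n a) {i j : Fin n} (hij : i ≠ j)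
    (hi : a i = 0) : IsPF n (Function.update a j 1) := by
  intro k hk
  rcases Nat.eq_zero_or_pos k with rfl | hk0
  · exact Nat.zero_le _
  rcases Nat.lt_or_ge k 2 with h2 | h2
  · refine le_trans (show k ≤ ({i} : Finset (Fin n)).card by
      rw [Finset.card_singleton]; omega) (Finset.card_le_card fun x hx => ?_)
    obtain rfl : x = i := by simpa using hx
    simp [hij, hi, hk0]
  · refine (ha k hk).trans (Finset.card_le_card fun x hx => ?_)
    simp only [Finset.mem_filter, Finset.mem_univ, true_and] at hx ⊢
    by_cases hxj : x = j
    · subst hxj; simp; omega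
    · simpa [hxj] using hx

/-- Raising an entry to `2` preserves parking functions as long as two other entries are `0`. -/
theorem IsPF.update_two {n : ℕ} {a : Fin n → ℕ} (ha : IsPF n a) {i j l : Fin n} (hij : i ≠ j)
    (hlj : l ≠ j) (hil : i ≠ l) (hi : a i = 0) (hl : a l = 0) :
    IsPF n (Function.update a j 2) := by
  intro k hk
  rcases Nat.eq_zero_or_pos k with rfl | hk0
  · exact Nat.zero_le _
  rcases Nat.lt_or_ge k 3 with h2 | h2
  · refine le_trans (show k ≤ ({i, l} : Finset (Fin n)).card by
      rw [Finset.card_pair hil]; omega) (Finset.card_le_card fun x hx => ?_)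
    rcases (by simpa using hx : x = i ∨ x = l) with rfl | rfl
    · simp [hij, hi, hk0]
    · simp [hlj, hl, hk0]
  · refine (ha k hk).trans (Finset.card_le_card fun x hx => ?_)
    simp only [Finset.mem_filter, Finset.mem_univ, true_and] at hx ⊢
    by_cases hxj : x = j
    · subst hxj; simp; omega
    · simpa [hxj] using hx

open Classical in
/-- The injection from parking functions with `a p = a q` to those with `a p < a q`. -/
noncomputable def splitEq {n : ℕ} (p q : Fin n) (a : Fin n → ℕ) : Fin n → ℕ :=
  if 0 < a p then Function.update a p (a p - 1)
  else if IsPF n (Function.update (Function.update a p 1) q 1) then Function.update a q 2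
  else Function.update a q 1

theorem splitEq_mem {n : ℕ} {p q : Fin n} (hpq : p ≠ q) {a : Fin n → ℕ} (ha : IsPF n a)
    (h : a p = a q) : IsPF n (splitEq p q a) ∧ splitEq p q a p < splitEq p q a q := by
  unfold splitEq
  split_ifs with h0 h1
  · refine ⟨ha.mono fun i => ?_, ?_⟩
    · by_cases hi : i = p
      · subst hi; simp
      · simp [hi]
    · simp [hpq.symm]; omega
  · have hp : a p = 0 := by omega
    refine ⟨?_, by simp [hpq, hp]⟩
    -- the condition at `k = 1` produces a zero outside the positions `p` and `q`
    obtain ⟨l, hl⟩ := Finset.card_pos.1 (h1 1 (by have := p.2; omega))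
    simp only [Finset.mem_filter, Finset.mem_univ, true_and] at hl
    have hlq : l ≠ q := by rintro rfl; simp at hl
    have hlp : l ≠ p := by rintro rfl; simp [hlq] at hl
    simp [hlq, hlp] at hl
    exact ha.update_two hpq hlq hlp.symm hp hl
  · have hp : a p = 0 := by omega
    exact ⟨ha.update_one hpq hp, by simp [hpq, hp]⟩

/-- Recovers `a = (1, 1, r)` from any `b` with the same tail `r`, in the form tested by `splitEq`. -/
theorem update_update_eq {n : ℕ} {p q : Fin n} {a b : Fin n → ℕ} (hp : a p = 1) (hq : a q = 1)
    (h : ∀ i, i ≠ p → i ≠ q → a i = b i) :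
    Function.update (Function.update b p 1) q 1 = a := by
  funext i
  by_cases hiq : i = q
  · subst hiq; simp [hq]
  · by_cases hip : i = p
    · subst hip; simp [hiq, hp]
    · simp [hiq, hip, h i hip hiq]

theorem splitEq_apply_of_ne {n : ℕ} {p q i : Fin n} (a : Fin n → ℕ) (hp : i ≠ p) (hq : i ≠ q) :
    splitEq p q a i = a i := by
  unfold splitEq
  split_ifs <;> simp [hp, hq]

/-- The images of `(x, x, r)` with `x > 0` never coincide with those of functions whose
value at `p` is `0`. -/
theorem splitEq_ne {n : ℕ} {p q : Fin n} (hpq : p ≠ q) {a b : Fin n → ℕ} (ha : IsPF n a)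
    (hab : a p = a q) (h0 : 0 < a p) (hb : b p = 0) : splitEq p q a ≠ splitEq p q b := by
  intro h
  have hr : ∀ i, i ≠ p → i ≠ q → a i = b i := fun i hi hi' => by
    rw [← splitEq_apply_of_ne a hi hi', h, splitEq_apply_of_ne b hi hi']
  have hp := congrFun h p
  have hq := congrFun h q
  unfold splitEq at hp hq
  rw [if_pos h0, if_neg (by omega)] at hp hq
  split_ifs at hp hq with h1
  · simp [hpq, hpq.symm] at hp hq; omega
  · simp [hpq, hpq.symm] at hp hq
    exact h1 (by rw [update_update_eq (by omega) hq hr]; exact ha)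

theorem splitEq_injOn {n : ℕ} {p q : Fin n} (hpq : p ≠ q) :
    Set.InjOn (splitEq p q) {a | IsPF n a ∧ a p = a q} := by
  rintro a ⟨ha, ha'⟩ b ⟨hb, hb'⟩ h
  have hr : ∀ i, i ≠ p → i ≠ q → a i = b i := fun i hi hi' => by
    rw [← splitEq_apply_of_ne a hi hi', h, splitEq_apply_of_ne b hi hi']
  have key : a p = b p := by
    rcases Nat.eq_zero_or_pos (a p) with h0 | h0 <;> rcases Nat.eq_zero_or_pos (b p) with h1 | h1
    · rw [h0, h1]
    · exact absurd h.symm (splitEq_ne hpq hb hb' h1 h0)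
    · exact absurd h (splitEq_ne hpq ha ha' h0 h1)
    · have hp := congrFun h p
      simp [splitEq, h0, h1] at hp
      omega
  funext i
  by_cases hip : i = p
  · rw [hip, key]
  · by_cases hiq : i = q
    · rw [hiq, ← ha', ← hb', key]
    · exact hr i hip hiq

/-- The number of parking functions of length `n` with `a_1 < a_2` is at least
the number with `a_1 = a_2`. -/
theorem lt_parking_count_ge_eq (n : ℕ) (hn : 2 ≤ n) :
    Set.ncard {a : Fin n → ℕ | IsPF n a ∧ a ⟨0, by omega⟩ = a ⟨1, by omega⟩} ≤
      Set.ncard {a : Fin n → ℕ | IsPF n a ∧ a ⟨0, by omega⟩ < a ⟨1, by omega⟩} := by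
  have hpq : (⟨0, by omega⟩ : Fin n) ≠ ⟨1, by omega⟩ := by simp
  refine Set.ncard_le_ncard_of_injOn _ (fun a ha => splitEq_mem hpq ha.1 ha.2)
    (splitEq_injOn hpq) ?_
  refine (Set.Finite.pi' (fun _ : Fin n => Set.finite_Iio n)).subset ?_
  exact fun a ha i => ha.1.lt i
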